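/- (Reflection lemma) Let p > 1, a, b, L > 0, let f : ℝ → ℝ be continuous, and let u ∈ C¹[0,L] with u(0) = u(L) = 0 be a weak solution of −Δ^{a,b}_p u = f(u) on (0,L). Suppose 0 ≤ α < β ≤ L satisfy u(α) = 0, u'(β) = 0 and u'(t) ≥ 0 for all t ∈ (α,β). Define w on [α, 2β−α] by w(t) = u(t) for t ∈ [α, β] and w(t) = u(2β − t) for t ∈ [β, 2β−α]. Then w ∈ C¹[α, 2β−α], w(α) = w(2β−α) = 0, and w is a weak solution of −a^p (|w'|^{p−2} w')' = f(w) on (α, 2β−α), i.e. ∫_α^{2β−α} a^p |w'(t)|^{p−2} w'(t) φ'(t) dt = ∫_α^{2β−α} f(w(t)) φ(t) dt for every φ ∈ C¹[α, 2β−α] with φ(α) = φ(2β−α) = 0. -/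

import Mathlib

open Set

/-- `u` is C¹ on `[α, γ]` with derivative `u'` there. -/
def C1On (α γ : ℝ) (u u' : ℝ → ℝ) : Prop :=
  (∀ t ∈ Set.Icc α γ, HasDerivWithinAt u (u' t) (Set.Icc α γ) t) ∧
  ContinuousOn u' (Set.Icc α γ)

/-- Admissible functions on `[0, L]`: C¹ with zero boundary values. -/
def Adm (L : ℝ) (u u' : ℝ → ℝ) : Prop :=
  C1On 0 L u u' ∧ u 0 = 0 ∧ u L = 0

/-- The asymmetric energy integrand `a^p (s⁺)^p + b^p (s⁻)^p`. -/
noncomputable def asymE (p a b s : ℝ) : ℝ :=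
  a ^ p * (max s 0) ^ p + b ^ p * (max (-s) 0) ^ p

/-- The asymmetric flux `a^p (s⁺)^(p-1) - b^p (s⁻)^(p-1)`. -/
noncomputable def asymFlux (p a b s : ℝ) : ℝ :=
  a ^ p * (max s 0) ^ (p - 1) - b ^ p * (max (-s) 0) ^ (p - 1)

/-- The first Dirichlet eigenvalue `λ^{a,b}_{1,p}(0,L)`, as the infimum of the
asymmetric energy over normalized admissible functions. -/
noncomputable def lam1 (p a b L : ℝ) : ℝ :=
  sInf { E : ℝ | ∃ u u' : ℝ → ℝ, Adm L u u' ∧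
    (∫ t in (0:ℝ)..L, |u t| ^ p) = 1 ∧
    E = ∫ t in (0:ℝ)..L, asymE p a b (u' t) }

/-- `u` (a C¹ function on `[0,L]` with derivative `u'` and zero boundary values)
is a weak solution of `-Δ^{a,b}_p u = g` on `(0,L)`. -/
def IsWeakSol (p a b L : ℝ) (u u' g : ℝ → ℝ) : Prop :=
  Adm L u u' ∧
  ∀ φ φ' : ℝ → ℝ, Adm L φ φ' →
    (∫ t in (0:ℝ)..L, asymFlux p a b (u' t) * φ' t) =
      ∫ t in (0:ℝ)..L, g t * φ t

/-!
Testing the weak equation against primitives shows (du Bois-Reymond) that it holds classically: the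
flux of `u'` is itself C¹ with derivative `-f(u)`. At `β` both `u'` and its flux vanish, so the even
reflection of `u` and the odd reflection of the flux about `β` are again C¹. Since
`s ↦ a^p |s|^(p-2) s` is odd and agrees with the asymmetric flux on `[0, ∞)`, the reflected flux is
the symmetric flux of the derivative of `w`, and integrating by parts recovers the weak equation.
-/

namespace C1On

variable {α β γ : ℝ} {u u' v v' : ℝ → ℝ}

lemma continuousOn (h : C1On α β u u') : ContinuousOn u (Icc α β) :=
  fun t ht => (h.1 t ht).continuousWithinAt

lemma hasDerivWithinAt (h : C1On α β u u') (t : ℝ) :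
    HasDerivWithinAt u (u' t) (Icc α β) t := by
  by_cases ht : t ∈ Icc α β
  · exact h.1 t ht
  · exact hasDerivWithinAt_iff_hasFDerivWithinAt.2 <|
      HasFDerivWithinAt.of_notMem_closure (by rwa [closure_Icc])

lemma intervalIntegrable_deriv (h : C1On α β u u') (hαβ : α ≤ β) :
    IntervalIntegrable u' MeasureTheory.volume α β :=
  h.2.intervalIntegrable_of_Icc hαβ

lemma mono {α' β' : ℝ} (h : C1On α β u u') (hα : α ≤ α') (hβ : β' ≤ β) : C1On α' β' u u' :=
  have hsub : Icc α' β' ⊆ Icc α β := Icc_subset_Icc hα hβ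
  ⟨fun t ht => (h.1 t (hsub ht)).mono hsub, h.2.mono hsub⟩

lemma congr (h : C1On α β u u') (hv : EqOn v u (Icc α β)) (hv' : EqOn v' u' (Icc α β)) :
    C1On α β v v' :=
  ⟨fun t ht => hv' ht ▸ (h.1 t ht).congr hv (hv ht), h.2.congr hv'⟩

lemma neg (h : C1On α β u u') : C1On α β (fun t => -u t) (fun t => -u' t) :=
  ⟨fun t ht => (h.1 t ht).fun_neg, h.2.fun_neg⟩

lemma comp_const_sub (h : C1On α β u u') (c : ℝ) :
    C1On (c - β) (c - α) (fun t => u (c - t)) (fun t => -u' (c - t)) := by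
  have hmaps : MapsTo (fun t => c - t) (Icc (c - β) (c - α)) (Icc α β) :=
    fun t ht => ⟨by linarith [ht.2], by linarith [ht.1]⟩
  refine ⟨fun t ht => ?_, (h.2.comp (by fun_prop) hmaps).fun_neg⟩
  simpa [Function.comp_def] using
    (h.1 _ (hmaps ht)).scomp t ((hasDerivWithinAt_id t _).const_sub c) hmaps

lemma trans (hαβ : α ≤ β) (hβγ : β ≤ γ) (h₁ : C1On α β u u') (h₂ : C1On β γ u u') :
    C1On α γ u u' := by
  rw [C1On, ← Icc_union_Icc_eq_Icc hαβ hβγ]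
  exact ⟨fun t _ => (h₁.hasDerivWithinAt t).union (h₂.hasDerivWithinAt t),
    h₁.2.union_of_isClosed h₂.2 isClosed_Icc isClosed_Icc⟩

lemma integral_mul_deriv_eq_neg (hαβ : α ≤ β) (hu : C1On α β u u') (hv : C1On α β v v')
    (hvα : v α = 0) (hvβ : v β = 0) :
    ∫ t in α..β, u t * v' t = -∫ t in α..β, u' t * v t := by
  rw [intervalIntegral.integral_mul_deriv_eq_deriv_mul_of_hasDerivWithinAt
    (fun t _ => uIcc_of_le hαβ ▸ hu.hasDerivWithinAt t)
    (fun t _ => uIcc_of_le hαβ ▸ hv.hasDerivWithinAt t)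
    (hu.intervalIntegrable_deriv hαβ) (hv.intervalIntegrable_deriv hαβ), hvα, hvβ]
  simp

end C1On

section DuBoisReymond

variable {α β : ℝ}

lemma c1On_integral {g : ℝ → ℝ} (hg : ContinuousOn g (Icc α β)) :
    C1On α β (fun t => ∫ s in α..t, g s) g := by
  refine ⟨fun t ht => ?_, hg⟩
  have : Fact (t ∈ Icc α β) := ⟨ht⟩
  exact intervalIntegral.integral_hasDerivWithinAt_right
    ((hg.mono (Icc_subset_Icc_right ht.2)).intervalIntegrable_of_Icc ht.1)
    (hg.stronglyMeasurableAtFilter_nhdsWithin measurableSet_Icc t) (hg t ht)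

lemma eqOn_zero_of_integral_mul_self_eq_zero (hαβ : α < β) {h : ℝ → ℝ}
    (hh : ContinuousOn h (Icc α β)) (hint : ∫ t in α..β, h t * h t = 0) :
    EqOn h 0 (Icc α β) := by
  intro t ht
  by_contra hht
  exact hint.not_gt <| intervalIntegral.integral_pos hαβ (hh.mul hh)
    (fun s _ => mul_self_nonneg (h s)) ⟨t, ht, mul_self_pos.2 hht⟩

/- The test function is the primitive of `h - c`, where `c` is the mean value of `h`. -/
lemma exists_eqOn_const_of_integral_mul_deriv_eq_zero (hαβ : α < β) {h : ℝ → ℝ}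
    (hh : ContinuousOn h (Icc α β))
    (hint : ∀ φ φ' : ℝ → ℝ, C1On α β φ φ' → φ α = 0 → φ β = 0 →
      ∫ t in α..β, h t * φ' t = 0) :
    ∃ c, EqOn h (fun _ => c) (Icc α β) := by
  let c := (∫ t in α..β, h t) / (β - α)
  have hd : ContinuousOn (fun t => h t - c) (Icc α β) := hh.sub continuousOn_const
  have hmean : ∫ t in α..β, (h t - c) = 0 := by
    rw [intervalIntegral.integral_sub (hh.intervalIntegrable_of_Icc hαβ.le) (by simp),
      intervalIntegral.integral_const, smul_eq_mul, mul_div_cancel₀ _ (sub_pos.2 hαβ).ne', sub_self]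
  have horth : ∫ t in α..β, h t * (h t - c) = 0 :=
    hint _ _ (c1On_integral hd) intervalIntegral.integral_same hmean
  have hsq : ∫ t in α..β, (h t - c) * (h t - c) = 0 := by
    simp_rw [sub_mul _ c]
    rw [intervalIntegral.integral_sub ((hh.fun_mul hd).intervalIntegrable_of_Icc hαβ.le)
      ((hd.const_mul c).intervalIntegrable_of_Icc hαβ.le), horth,
      intervalIntegral.integral_const_mul, hmean, mul_zero, sub_zero]
  exact ⟨c, fun t ht => sub_eq_zero.1 (eqOn_zero_of_integral_mul_self_eq_zero hαβ hd hsq ht)⟩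

lemma c1On_of_integral_mul_deriv_eq_neg (hαβ : α < β) {F g : ℝ → ℝ}
    (hF : ContinuousOn F (Icc α β)) (hg : ContinuousOn g (Icc α β))
    (hint : ∀ φ φ' : ℝ → ℝ, C1On α β φ φ' → φ α = 0 → φ β = 0 →
      ∫ t in α..β, F t * φ' t = -∫ t in α..β, g t * φ t) :
    C1On α β F g := by
  have hG := c1On_integral hg
  set G := fun t => ∫ s in α..t, g s
  obtain ⟨c, hc⟩ : ∃ c, EqOn (fun t => F t - G t) (fun _ => c) (Icc α β) := by
    refine exists_eqOn_const_of_integral_mul_deriv_eq_zero hαβ (hF.sub hG.continuousOn)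
      fun φ φ' hφ hφα hφβ => ?_
    simp_rw [sub_mul]
    rw [intervalIntegral.integral_sub ((hF.fun_mul hφ.2).intervalIntegrable_of_Icc hαβ.le)
      ((hG.continuousOn.fun_mul hφ.2).intervalIntegrable_of_Icc hαβ.le), hint φ φ' hφ hφα hφβ,
      hG.integral_mul_deriv_eq_neg hαβ.le hφ hφα hφβ, sub_self]
  have hFG : EqOn F (fun t => G t + c) (Icc α β) := fun t ht => sub_eq_iff_eq_add'.1 (hc ht)
  exact ⟨fun t ht => ((hG.1 t ht).add_const c).congr hFG (hFG ht), hg⟩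

end DuBoisReymond

section Flux

variable {p a b : ℝ}

lemma continuous_asymFlux (hp : 1 ≤ p) : Continuous (asymFlux p a b) := by
  have hexp : 0 ≤ p - 1 := sub_nonneg.2 hp
  unfold asymFlux
  fun_prop (disch := exact fun _ => Or.inr hexp)

lemma asymFlux_of_nonneg (hp : p ≠ 1) {s : ℝ} (hs : 0 ≤ s) :
    asymFlux p a b s = a ^ p * |s| ^ (p - 2) * s := by
  have hexp : p - 1 ≠ 0 := sub_ne_zero.2 hp
  rcases hs.eq_or_lt with rfl | hs
  · simp [asymFlux, Real.zero_rpow hexp]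
  · have hpow : s ^ (p - 1) = s ^ (p - 2) * s := by
      rw [← Real.rpow_add_one hs.ne']
      ring_nf
    rw [asymFlux, max_eq_left hs.le, max_eq_right (neg_nonpos.2 hs.le), Real.zero_rpow hexp,
      abs_of_pos hs, hpow]
    ring

lemma IsWeakSol.c1On_asymFlux {L : ℝ} {u u' g : ℝ → ℝ} (hp : 1 ≤ p) (hL : 0 < L)
    (hg : ContinuousOn g (Icc 0 L)) (h : IsWeakSol p a b L u u' g) :
    C1On 0 L (fun t => asymFlux p a b (u' t)) (fun t => -g t) := by
  obtain ⟨⟨hu, -, -⟩, hweak⟩ := h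
  refine c1On_of_integral_mul_deriv_eq_neg hL ((continuous_asymFlux hp).comp_continuousOn hu.2)
    hg.neg fun φ φ' hφ hφ0 hφL => ?_
  simpa only [neg_mul, intervalIntegral.integral_neg, neg_neg] using hweak φ φ' ⟨hφ, hφ0, hφL⟩

end Flux

/-- The function which agrees with `u` on `(-∞, β]` and is symmetric about `β`; it extends a
function on `[α, β]` to `[α, 2β - α]`. -/
noncomputable def evenReflection (β : ℝ) (u : ℝ → ℝ) (t : ℝ) : ℝ :=
  if t ≤ β then u t else u (2 * β - t)

/-- The function which agrees with `v` on `(-∞, β]` and is antisymmetric about `β`, except that its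
value at `β` itself is `v β` even if that is nonzero. The derivative of an even reflection has this
form. -/
noncomputable def oddReflection (β : ℝ) (v : ℝ → ℝ) (t : ℝ) : ℝ :=
  if t ≤ β then v t else -v (2 * β - t)

section Reflection

variable {α β t : ℝ} {u u' v v' : ℝ → ℝ}

lemma evenReflection_of_le (ht : t ≤ β) : evenReflection β u t = u t := if_pos ht

lemma evenReflection_of_ge (ht : β ≤ t) : evenReflection β u t = u (2 * β - t) := by
  rcases ht.eq_or_lt with rfl | ht
  · rw [evenReflection_of_le le_rfl, two_mul, add_sub_cancel_right]
  · exact if_neg ht.not_ge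

lemma oddReflection_of_le (ht : t ≤ β) : oddReflection β v t = v t := if_pos ht

lemma oddReflection_of_ge (hv : v β = 0) (ht : β ≤ t) :
    oddReflection β v t = -v (2 * β - t) := by
  rcases ht.eq_or_lt with rfl | ht
  · rw [oddReflection_of_le le_rfl, two_mul, add_sub_cancel_right, hv, neg_zero]
  · exact if_neg ht.not_ge

lemma evenReflection_comp (f : ℝ → ℝ) :
    evenReflection β (fun t => f (u t)) = fun t => f (evenReflection β u t) :=
  funext fun _ => (apply_ite f _ _ _).symm

lemma oddReflection_comp {f : ℝ → ℝ} (hf : ∀ s, f (-s) = -f s) :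
    oddReflection β (fun t => f (v t)) = fun t => f (oddReflection β v t) := by
  funext t
  simp only [oddReflection, apply_ite f, hf]

protected lemma C1On.evenReflection (hαβ : α ≤ β) (h : C1On α β u u') (hu' : u' β = 0) :
    C1On α (2 * β - α) (evenReflection β u) (oddReflection β u') := by
  have hr := h.comp_const_sub (2 * β)
  rw [two_mul, add_sub_cancel_right, ← two_mul] at hr
  exact C1On.trans hαβ (by linarith)
    (h.congr (fun t ht => evenReflection_of_le ht.2) (fun t ht => oddReflection_of_le ht.2))
    (hr.congr (fun t ht => evenReflection_of_ge ht.1) (fun t ht => oddReflection_of_ge hu' ht.1))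

protected lemma C1On.oddReflection (hαβ : α ≤ β) (h : C1On α β v v') (hv : v β = 0) :
    C1On α (2 * β - α) (oddReflection β v) (evenReflection β v') := by
  have hr := (h.comp_const_sub (2 * β)).neg
  simp only [neg_neg] at hr
  rw [two_mul, add_sub_cancel_right, ← two_mul] at hr
  exact C1On.trans hαβ (by linarith)
    (h.congr (fun t ht => oddReflection_of_le ht.2) (fun t ht => evenReflection_of_le ht.2))
    (hr.congr (fun t ht => oddReflection_of_ge hv ht.1) (fun t ht => evenReflection_of_ge ht.1))

end Reflection

lemma nonneg_on_Icc_of_nonneg_on_Ioo {α β : ℝ} {v : ℝ → ℝ} (hαβ : α < β)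
    (hv : ContinuousOn v (Icc α β)) (hnonneg : ∀ t ∈ Ioo α β, 0 ≤ v t) :
    ∀ t ∈ Icc α β, 0 ≤ v t := by
  rw [← closure_Ioo hαβ.ne] at hv ⊢
  exact fun t ht => le_on_closure hnonneg continuousOn_const hv ht

theorem stmt8 (p a b L : ℝ) (hp : 1 < p) (ha : 0 < a) (hb : 0 < b) (hL : 0 < L)
    (f : ℝ → ℝ) (hf : Continuous f) (u u' : ℝ → ℝ)
    (hsol : IsWeakSol p a b L u u' (fun t => f (u t)))
    (α β : ℝ) (hα : 0 ≤ α) (hβ : β ≤ L) (hαβ : α < β)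
    (huα : u α = 0) (hu'β : u' β = 0)
    (hmono : ∀ t ∈ Set.Ioo α β, 0 ≤ u' t) :
    ∃ w w' : ℝ → ℝ,
      (∀ t ∈ Set.Icc α β, w t = u t) ∧
      (∀ t ∈ Set.Icc β (2 * β - α), w t = u (2 * β - t)) ∧
      C1On α (2 * β - α) w w' ∧ w α = 0 ∧ w (2 * β - α) = 0 ∧
      ∀ φ φ' : ℝ → ℝ, C1On α (2 * β - α) φ φ' → φ α = 0 → φ (2 * β - α) = 0 →
        (∫ t in α..(2 * β - α), a ^ p * |w' t| ^ (p - 2) * w' t * φ' t) =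
          ∫ t in α..(2 * β - α), f (w t) * φ t := by
  obtain ⟨hu, -, -⟩ := hsol.1
  have huαβ : C1On α β u u' := hu.mono hα hβ
  have hnonneg := nonneg_on_Icc_of_nonneg_on_Ioo hαβ huαβ.2 hmono
  have hflux : C1On α β (fun t => a ^ p * |u' t| ^ (p - 2) * u' t) (fun t => -f (u t)) :=
    ((hsol.c1On_asymFlux hp.le hL (hf.comp_continuousOn hu.continuousOn)).mono hα hβ).congr
      (fun t ht => (asymFlux_of_nonneg hp.ne' (hnonneg t ht)).symm) fun _ _ => rfl
  have hflux_reflected : C1On α (2 * β - α)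
      (fun t => a ^ p * |oddReflection β u' t| ^ (p - 2) * oddReflection β u' t)
      (fun t => -f (evenReflection β u t)) := by
    rw [← oddReflection_comp (f := fun s => a ^ p * |s| ^ (p - 2) * s) (by simp),
      ← evenReflection_comp (fun s => -f s)]
    exact hflux.oddReflection hαβ.le (by simp [hu'β])
  refine ⟨evenReflection β u, oddReflection β u', fun t ht => evenReflection_of_le ht.2,
    fun t ht => evenReflection_of_ge ht.1, huαβ.evenReflection hαβ.le hu'β,
    (evenReflection_of_le hαβ.le).trans huα, ?_, fun φ φ' hφ hφα hφγ => ?_⟩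
  · rw [evenReflection_of_ge (by linarith), sub_sub_cancel, huα]
  · simpa only [neg_mul, intervalIntegral.integral_neg, neg_neg] using
      hflux_reflected.integral_mul_deriv_eq_neg (by linarith) hφ hφα hφγ
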